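/- If there exists a recoverable wait-free binary consensus algorithm for n > 1 processes p_0,…,p_{n−1} using objects of deterministic types 𝒯_0, 𝒯_1, 𝒯_2, …, then at least one of the types 𝒯_i is n-recording. -/

import Mathlib

namespace RecoverableConsensus

/-- A deterministic object type: a set of values, operations and responses together with a
transition function assigning to each (value, operation) pair a unique response and a unique
resulting value. -/
structure DetType : Type 1 where
  Value : Type
  Op : Type
  Resp : Type
  δ : Value → Op → Resp × Value

/-- A type is readable if it has a Read operation that returns (an injective encoding of)
the current value of the object without changing it. -/
def Readable (T : DetType) : Prop :=
  ∃ (read : T.Op) (ι : T.Value → T.Resp),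
    Function.Injective ι ∧ ∀ v, T.δ v read = (ι v, v)

/-- The register type over the value set `V`: the operation `none` is Read (returning the
current value without changing it) and `some v` is Write(v) (changing the value to `v`). -/
def RegisterType (V : Type) : DetType where
  Value := V
  Op := Option V
  Resp := V
  δ := fun u op =>
    match op with
    | none => (u, u)
    | some v => (v, v)

def IsRegister (T : DetType) : Prop := ∃ V : Type, T = RegisterType V

/-- An event is either a step by a process or a crash of a process. -/
inductive Event (n : ℕ) : Type where
  | step : Fin n → Event n
  | crash : Fin n → Event n
deriving DecidableEq

/-- An algorithm for `n` processes: a collection of shared objects, each with a deterministic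
type and an initial value, and for each process a deterministic state machine with an initial
state depending on the process's binary input.  Each state determines the process's next step
(`pending`: an operation applied to a designated object, or `none` for a no-op); the state
reached after a step is determined by the current state and the response received (`next`).
`output i s = some v` means that `s` is an output state of process `i` for the value `v`;
processes in output states take only no-op steps. -/
structure Algorithm (n : ℕ) : Type 1 where
  ObjIdx : Type
  objType : ObjIdx → DetType
  objInit : (o : ObjIdx) → (objType o).Value
  PState : Fin n → Type
  init : (i : Fin n) → Bool → PState i
  pending : (i : Fin n) → PState i → Option ((o : ObjIdx) × (objType o).Op)
  next : (i : Fin n) → PState i → (o : ObjIdx) → (objType o).Resp → PState i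
  output : (i : Fin n) → PState i → Option Bool
  output_noop : ∀ i s, output i s ≠ none → pending i s = none

/-- A configuration assigns a state to each process and a value to each object. -/
structure Config {n : ℕ} (A : Algorithm n) : Type where
  pstate : (i : Fin n) → A.PState i
  oval : (o : A.ObjIdx) → (A.objType o).Value

variable {n : ℕ}

/-- The effect of one event on a configuration.  A crash of `p_i` resets `p_i` to its initial
state (for its input) and leaves all object values unchanged; a step of `p_i` applies its
pending operation (if any) to the designated object, receiving the response determined by the
type's transition function. -/
noncomputable def applyEvent (A : Algorithm n) (input : Fin n → Bool) (C : Config A) :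
    Event n → Config A
  | .crash i => { C with pstate := Function.update C.pstate i (A.init i (input i)) }
  | .step i =>
    letI : DecidableEq A.ObjIdx := Classical.decEq _
    match A.pending i (C.pstate i) with
    | none => C
    | some ⟨o, op⟩ =>
      { pstate := Function.update C.pstate i
          (A.next i (C.pstate i) o ((A.objType o).δ (C.oval o) op).1),
        oval := Function.update C.oval o ((A.objType o).δ (C.oval o) op).2 }

/-- Since the algorithm is deterministic, a finite execution from `C` is determined by its
schedule, i.e. its list of events; `run A input C σ` is the configuration `Cσ` reached by
applying the events of `σ` in order from `C`. -/
noncomputable def run (A : Algorithm n) (input : Fin n → Bool) (C : Config A) :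
    List (Event n) → Config A
  | [] => C
  | e :: σ => run A input (applyEvent A input C e) σ

/-- The initial configuration: every process in its initial state, every object at its
initial value. -/
def initConfig (A : Algorithm n) (input : Fin n → Bool) : Config A :=
  ⟨fun i => A.init i (input i), A.objInit⟩

/-- Process `i` has decided `v` in `Cσ`: at some point along the execution `σ` from `C`,
process `i` was in an output state for `v`. -/
def HasDecided (A : Algorithm n) (input : Fin n → Bool) (C : Config A)
    (σ : List (Event n)) (i : Fin n) (v : Bool) : Prop :=
  ∃ τ, τ <+: σ ∧ A.output i ((run A input C τ).pstate i) = some v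

def CrashFree (σ : List (Event n)) : Prop := ∀ i : Fin n, Event.crash i ∉ σ

/-- The first `k` events of an infinite execution. -/
def initSeg (e : ℕ → Event n) (k : ℕ) : List (Event n) := (List.range k).map e

/-- Agreement: in every execution no two processes decide different values. -/
def Agreement (A : Algorithm n) : Prop :=
  ∀ (input : Fin n → Bool) (σ : List (Event n)) (i j : Fin n) (v w : Bool),
    HasDecided A input (initConfig A input) σ i v →
    HasDecided A input (initConfig A input) σ j w → v = w

/-- Validity: every decided value is the input of some process. -/
def Validity (A : Algorithm n) : Prop :=
  ∀ (input : Fin n → Bool) (σ : List (Event n)) (i : Fin n) (v : Bool),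
    HasDecided A input (initConfig A input) σ i v → ∃ j, input j = v

/-- Recoverable wait-freedom: every process, starting from its initial state, either crashes
or decides within a finite number of its own steps.  Equivalently: in every infinite execution
in which process `i` starts at (or is reset by a crash to) its initial state, takes infinitely
many steps and crashes only finitely often, it eventually reaches an output state. -/
def RecWaitFree (A : Algorithm n) : Prop :=
  ∀ (input : Fin n → Bool) (C : Config A) (e : ℕ → Event n) (i : Fin n),
    (C.pstate i = A.init i (input i) ∨ ∃ k, e k = Event.crash i) →
    (∀ m, ∃ k, m ≤ k ∧ e k = Event.step i) →
    (∃ m, ∀ k, m ≤ k → e k ≠ Event.crash i) →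
    ∃ (k : ℕ) (v : Bool), A.output i ((run A input C (initSeg e k)).pstate i) = some v

/-- A recoverable wait-free binary consensus algorithm. -/
def SolvesRecConsensus (A : Algorithm n) : Prop :=
  Agreement A ∧ Validity A ∧ RecWaitFree A

/-- Agreement restricted to crash-free executions. -/
def AgreementCF (A : Algorithm n) : Prop :=
  ∀ (input : Fin n → Bool) (σ : List (Event n)), CrashFree σ →
    ∀ (i j : Fin n) (v w : Bool),
      HasDecided A input (initConfig A input) σ i v →
      HasDecided A input (initConfig A input) σ j w → v = w

/-- Validity restricted to crash-free executions. -/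
def ValidityCF (A : Algorithm n) : Prop :=
  ∀ (input : Fin n → Bool) (σ : List (Event n)), CrashFree σ →
    ∀ (i : Fin n) (v : Bool),
      HasDecided A input (initConfig A input) σ i v → ∃ j, input j = v

/-- Wait-freedom: in crash-free executions, every process that takes infinitely many steps
decides. -/
def WaitFree (A : Algorithm n) : Prop :=
  ∀ (input : Fin n → Bool) (e : ℕ → Event n),
    (∀ (k : ℕ) (i : Fin n), e k ≠ Event.crash i) →
    ∀ i : Fin n, (∀ m, ∃ k, m ≤ k ∧ e k = Event.step i) →
    ∃ (k : ℕ) (v : Bool),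
      A.output i ((run A input (initConfig A input) (initSeg e k)).pstate i) = some v

/-- A wait-free binary consensus algorithm (for the model in which crashes are permanent,
i.e. only crash-free executions are relevant). -/
def SolvesWFConsensus (A : Algorithm n) : Prop :=
  AgreementCF A ∧ ValidityCF A ∧ WaitFree A

/-- The number of crashes of process `i` in `σ`. -/
def crashCount (i : Fin n) (σ : List (Event n)) : ℕ :=
  (σ.filter fun e => decide (e = Event.crash i)).length

def isStepBelow (i : Fin n) : Event n → Bool
  | .step j => decide (j < i)
  | .crash _ => false

/-- The total number of steps taken by processes `p_0, …, p_{i-1}` in `σ`. -/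
def stepsBelow (i : Fin n) (σ : List (Event n)) : ℕ := (σ.filter (isStepBelow i)).length

/-- The crash bound: for every process `p_i`, the number of crashes of `p_i` is at most
`z·n` times the total number of steps of `p_0, …, p_{i-1}` (for `i = 0` this says that `p_0`
never crashes). -/
def EMem (z : ℕ) (σ : List (Event n)) : Prop :=
  ∀ i : Fin n, crashCount i σ ≤ z * n * stepsBelow i σ

/-- `𝓔_z`: executions satisfying the crash bound. -/
def ESet (n z : ℕ) : Set (List (Event n)) := { σ | EMem z σ }

/-- `𝓔*_z`: executions satisfying the crash bound in every prefix. -/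
def EStarSet (n z : ℕ) : Set (List (Event n)) := { σ | ∀ τ, τ <+: σ → EMem z τ }

/-- `e` is an event by a process in `P`. -/
def eventBy (P : Set (Fin n)) : Event n → Prop
  | .step i => i ∈ P
  | .crash i => i ∈ P

/-- The set of processes `P` is `v`-univalent in the execution `α` from `C` with respect to
the set of executions `𝒜`. -/
def VUnivalentIn (A : Algorithm n) (input : Fin n → Bool) (C : Config A)
    (𝒜 : Set (List (Event n))) (P : Set (Fin n)) (α : List (Event n)) (v : Bool) : Prop :=
  α ∈ 𝒜 ∧ ∀ β : List (Event n), (∀ e ∈ β, eventBy P e) → (α ++ β) ∈ 𝒜 →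
    ∀ (i : Fin n) (w : Bool), HasDecided A input C (α ++ β) i w → w = v

/-- The set of processes `P` is bivalent in the execution `α` from `C` with respect to `𝒜`. -/
def BivalentIn (A : Algorithm n) (input : Fin n → Bool) (C : Config A)
    (𝒜 : Set (List (Event n))) (P : Set (Fin n)) (α : List (Event n)) : Prop :=
  ∀ v : Bool, ∃ β : List (Event n), (∀ e ∈ β, eventBy P e) ∧ (α ++ β) ∈ 𝒜 ∧
    ∃ i : Fin n, HasDecided A input C (α ++ β) i v

/-- `P` is univalent in `α` with respect to `𝒜`: `v`-univalent for some `v`. -/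
def UnivalentIn (A : Algorithm n) (input : Fin n → Bool) (C : Config A)
    (𝒜 : Set (List (Event n))) (P : Set (Fin n)) (α : List (Event n)) : Prop :=
  ∃ v : Bool, VUnivalentIn A input C 𝒜 P α v

/-- `α ∈ 𝒜` is critical with respect to `𝒜`: `α` is bivalent with respect to `𝒜` and every
nonempty extension of `α` inside `𝒜` is univalent with respect to `𝒜`. -/
def Critical (A : Algorithm n) (input : Fin n → Bool) (C : Config A)
    (𝒜 : Set (List (Event n))) (α : List (Event n)) : Prop :=
  α ∈ 𝒜 ∧ BivalentIn A input C 𝒜 Set.univ α ∧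
  ∀ β : List (Event n), β ≠ [] → (α ++ β) ∈ 𝒜 → UnivalentIn A input C 𝒜 Set.univ (α ++ β)

/-- Process `i` is on team `v` in `Cα` (with respect to `𝒜`): `α p_i` is `v`-univalent. -/
def OnTeam (A : Algorithm n) (input : Fin n → Bool) (C : Config A)
    (𝒜 : Set (List (Event n))) (α : List (Event n)) (i : Fin n) (v : Bool) : Prop :=
  VUnivalentIn A input C 𝒜 Set.univ (α ++ [Event.step i]) v

/-- Process `i` is poised to apply an operation to object `O` in configuration `C`. -/
def PoisedAt (A : Algorithm n) (C : Config A) (i : Fin n) (O : A.ObjIdx) : Prop :=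
  ∃ op, A.pending i (C.pstate i) = some ⟨O, op⟩

/-- `σ ∈ 𝒮(P)`: a crash-free schedule in which each process of `P` takes at most one step
and no other process takes a step. -/
def IsSched (P : Set (Fin n)) (σ : List (Event n)) : Prop :=
  ∃ l : List (Fin n), l.Nodup ∧ (∀ j ∈ l, j ∈ P) ∧ σ = l.map Event.step

/-- The schedule `λ_k = c_k c_{k+1} ⋯ c_{n-1}`. -/
def lambdaSched (n k : ℕ) : List (Event n) :=
  ((List.finRange n).filter fun j => decide (k ≤ j.val)).map Event.crash

/-- `U_v`: the set of values of object `O` reachable from `Dα` by a schedule in `𝒮(𝒫)`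
whose first process is on team `v`. -/
def USetCfg (A : Algorithm n) (input : Fin n → Bool) (D : Config A)
    (𝒜 : Set (List (Event n))) (α : List (Event n)) (O : A.ObjIdx) (v : Bool) :
    Set (A.objType O).Value :=
  { w | ∃ (j : Fin n) (σ : List (Event n)), OnTeam A input D 𝒜 α j v ∧
        IsSched {k : Fin n | k ≠ j} σ ∧
        w = (run A input D (α ++ Event.step j :: σ)).oval O }

/-- The configuration `Dα` is `v`-hiding. -/
def VHiding (A : Algorithm n) (input : Fin n → Bool) (D : Config A)
    (𝒜 : Set (List (Event n))) (α : List (Event n)) (O : A.ObjIdx) (v : Bool) : Prop :=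
  USetCfg A input D 𝒜 α O false ∩ USetCfg A input D 𝒜 α O true = ∅ ∧
  (run A input D α).oval O ∈ USetCfg A input D 𝒜 α O v

/-- The configuration `Dα` is `n`-recording. -/
def NRecordingCfg (A : Algorithm n) (input : Fin n → Bool) (D : Config A)
    (𝒜 : Set (List (Event n))) (α : List (Event n)) (O : A.ObjIdx) : Prop :=
  USetCfg A input D 𝒜 α O false ∩ USetCfg A input D 𝒜 α O true = ∅ ∧
  ∀ v : Bool, (run A input D α).oval O ∈ USetCfg A input D 𝒜 α O v →
    ∃! j : Fin n, OnTeam A input D 𝒜 α j (!v)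

/-- Apply the operations `o i` of the processes listed in `σ`, in order, to an object of type
`T`, starting from the value `u`. -/
def applyOps (T : DetType) (o : Fin n → T.Op) : T.Value → List (Fin n) → T.Value
  | u, [] => u
  | u, i :: σ => applyOps T o (T.δ u (o i)).2 σ

/-- `U_x`: the set of values obtainable by applying the operations of the processes of a
duplicate-free schedule whose first process is on team `x` to an object with initial value
`u`. -/
def UVals (T : DetType) (o : Fin n → T.Op) (u : T.Value) (team : Fin n → Bool) (x : Bool) :
    Set T.Value :=
  { v | ∃ (i : Fin n) (σ : List (Fin n)), team i = x ∧ (i :: σ).Nodup ∧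
        v = applyOps T o u (i :: σ) }

/-- A deterministic type `T` is `n`-recording. -/
def NRecording (n : ℕ) (T : DetType) : Prop :=
  ∃ (u : T.Value) (team : Fin n → Bool) (o : Fin n → T.Op),
    (∀ x : Bool, ∃ i, team i = x) ∧
    (UVals T o u team false ∩ UVals T o u team true = ∅) ∧
    (∀ x : Bool, u ∈ UVals T o u team x → ∃! i, team i = !x)

end RecoverableConsensus

/-!
Suppose that crashes are rationed: `p_i` may crash only as often as its budget allows, and budgets
are replenished by steps of smaller processes; in particular `p_0` never crashes. In an infinite
execution, the smallest process that takes infinitely many steps eventually has a budget that only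
decreases, so it crashes finitely often and decides. Hence bivalence cannot persist and there is a
critical configuration. Every process is then on one of two teams, all processes are poised at the
same object, and the type of this object is `n`-recording unless one of two things happens: a step
by `p_{n-1}` has the same effect on the object as a schedule that contains `p_0` and starts on the
other team, or some schedule restores the value of the object while the team on which it does not
start has two members.

In either case, a crash of a suitable tail `p_k, …, p_{n-1}` makes the tail unable to tell which
team went first, which yields a bivalent configuration in which the tail by itself decides only one
value. The argument above still works if a step also pays for crashes that happened shortly before
it. If the critical configuration `C` is chosen minimal in this wider sense, then, after any events
of the tail, no step of a process before `p_k` preserves bivalence, so events of the tail alone lead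
from `C` to a new critical configuration. There the first obstruction is impossible, and the second
one has the same consequence with a smaller `k > 0`; after finitely many repetitions no obstruction
is left.
-/

namespace RecoverableConsensus

open Filter Set

/-! ### Chains of lists and their limits -/

section Sequences

lemma exists_least_frequently {α ι : Type*} [LinearOrder ι] [Finite ι] {l : Filter α}
    {p : ι → α → Prop} (h : ∃ᶠ x in l, ∃ i, p i x) :
    ∃ i, (∃ᶠ x in l, p i x) ∧ ∀ᶠ x in l, ∀ j < i, ¬ p j x := by
  obtain ⟨i, hi, hmin⟩ :=
    wellFounded_lt.has_min {i | ∃ᶠ x in l, p i x} (frequently_exists.mp h)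
  refine ⟨i, hi, eventually_all.mpr fun j => ?_⟩
  by_cases hj : j < i
  · exact (not_frequently.mp fun h => hmin j h hj).mono fun _ h _ => h
  · exact .of_forall fun _ h => absurd h hj

lemma eventually_not_succ_lt {α : Type*} [PartialOrder α] [WellFoundedLT α] {f : ℕ → α}
    (hf : ∀ᶠ k in atTop, f (k + 1) ≤ f k) : ∀ᶠ k in atTop, ¬ f (k + 1) < f k := by
  obtain ⟨K, hK⟩ := eventually_atTop.mp hf
  obtain ⟨d, hd⟩ := WellFoundedLT.antitone_chain_condition (f := fun d => f (K + d))
    (antitone_nat_of_succ_le fun d => hK (K + d) (Nat.le_add_right K d))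
  refine eventually_atTop.mpr ⟨K + d, fun k hk => ?_⟩
  obtain ⟨m, rfl⟩ := Nat.exists_eq_add_of_le ((Nat.le_add_right K d).trans hk)
  have hm : d ≤ m := by omega
  exact ((hd m hm).symm.trans (hd (m + 1) (by omega))).not_gt

lemma exists_le_lt_succ_of_strictMono {f : ℕ → ℕ} (hf : StrictMono f) {K m : ℕ}
    (hm : f K ≤ m) : ∃ k, K ≤ k ∧ f k ≤ m ∧ m < f (k + 1) := by
  have hKm : K ≤ m := hf.le_apply.trans hm
  refine ⟨Nat.findGreatest (fun k => f k ≤ m) m, Nat.le_findGreatest hKm hm,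
    Nat.findGreatest_spec (P := fun k => f k ≤ m) hKm hm, ?_⟩
  by_contra! hle
  have := Nat.le_findGreatest (P := fun k => f k ≤ m) (hf.le_apply.trans hle) hle
  omega

variable {α : Type*} {σ ρ : ℕ → List α}

lemma strictMono_length_of_chain (hσ : ∀ k, σ (k + 1) = σ k ++ ρ k) (hρ : ∀ k, ρ k ≠ []) :
    StrictMono fun k => (σ k).length := by
  refine strictMono_nat_of_lt_succ fun k => ?_
  simpa only [hσ, List.length_append, Nat.lt_add_right_iff_pos] using
    List.length_pos_iff.mpr (hρ k)

lemma exists_limit_of_chain (hσ : ∀ k, σ (k + 1) = σ k ++ ρ k) (hρ : ∀ k, ρ k ≠ []) :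
    ∃ e : ℕ → α, ∀ k, σ k = (List.range (σ k).length).map e := by
  have hσ_le : ∀ k d, σ k <+: σ (k + d) := by
    intro k d
    induction d with
    | zero => exact List.prefix_rfl
    | succ d ih => exact ih.trans (by rw [← add_assoc, hσ]; exact List.prefix_append _ _)
  have hlen : ∀ m, m < (σ (m + 1)).length := fun m =>
    (strictMono_length_of_chain hσ hρ).le_apply
  refine ⟨fun m => (σ (m + 1))[m]'(hlen m), fun k => ?_⟩
  refine List.ext_getElem (by simp) fun m hm _ => ?_
  rw [List.getElem_map, List.getElem_range]
  rcases le_total (m + 1) k with hk | hk <;> obtain ⟨d, hd⟩ := Nat.exists_eq_add_of_le hk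
  · subst hd
    exact ((hσ_le (m + 1) d).getElem _).symm
  · have := hσ_le k d
    rw [← hd] at this
    exact this.getElem hm

lemma frequently_eq_iff_frequently_mem (hσ : ∀ k, σ (k + 1) = σ k ++ ρ k) (hρ : ∀ k, ρ k ≠ [])
    {e : ℕ → α} (he : ∀ k, σ k = (List.range (σ k).length).map e) (a : α) :
    (∃ᶠ m in atTop, e m = a) ↔ ∃ᶠ k in atTop, a ∈ ρ k := by
  have hmono := strictMono_length_of_chain hσ hρ
  have hmem : ∀ k, a ∈ ρ k ↔ ∃ m, (σ k).length ≤ m ∧ m < (σ (k + 1)).length ∧ e m = a := by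
    intro k
    have hblock : ρ k = ((List.range (σ (k + 1)).length).map e).drop (σ k).length := by
      rw [← he, hσ, List.drop_left]
    rw [hblock, List.range_eq_range', ← List.map_drop, List.drop_range']
    have := hmono.monotone (Nat.le_succ k)
    simp only [Nat.succ_eq_add_one] at this
    simp only [List.mem_map, List.mem_range'_1]
    grind
  simp only [frequently_atTop, hmem]
  constructor
  · intro h K
    obtain ⟨m, hm, rfl⟩ := h (σ K).length
    obtain ⟨k, hKk, hkm, hmk⟩ := exists_le_lt_succ_of_strictMono hmono hm
    exact ⟨k, hKk, m, hkm, hmk, rfl⟩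
  · intro h M
    obtain ⟨k, hk, m, hkm, -, rfl⟩ := h M
    exact ⟨m, (hk.trans hmono.le_apply).trans hkm, rfl⟩

end Sequences

/-! ### Runs and solo executions -/

section Runs

variable {n : ℕ} {A : Algorithm n} {input : Fin n → Bool}

lemma run_append (C : Config A) (σ τ : List (Event n)) :
    run A input C (σ ++ τ) = run A input (run A input C σ) τ := by
  induction σ generalizing C with
  | nil => rfl
  | cons e _ ih => exact ih _

lemma applyEvent_pstate_of_not_eventBy (C : Config A) {e : Event n} {j : Fin n}
    (h : ¬ eventBy {j} e) : (applyEvent A input C e).pstate j = C.pstate j := by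
  cases e with
  | crash i => exact Function.update_of_ne (Ne.symm h) ..
  | step i =>
    simp only [applyEvent]
    split
    · rfl
    · exact Function.update_of_ne (Ne.symm h) ..

lemma run_pstate_of_not_eventBy (C : Config A) {σ : List (Event n)} {j : Fin n}
    (h : ∀ e ∈ σ, ¬ eventBy {j} e) : (run A input C σ).pstate j = C.pstate j := by
  induction σ generalizing C with
  | nil => rfl
  | cons e σ ih =>
    rw [List.forall_mem_cons] at h
    exact (ih _ h.2).trans (applyEvent_pstate_of_not_eventBy C h.1)

lemma run_steps_pstate_of_notMem (C : Config A) {l : List (Fin n)} {j : Fin n} (h : j ∉ l) :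
    (run A input C (l.map .step)).pstate j = C.pstate j := by
  refine run_pstate_of_not_eventBy C fun e he hj => ?_
  obtain ⟨i, hi, rfl⟩ := List.mem_map.mp he
  obtain rfl : i = j := hj
  exact h hi

lemma applyEvent_step_of_pending_eq_none (C : Config A) {i : Fin n}
    (h : A.pending i (C.pstate i) = none) : applyEvent A input C (.step i) = C := by
  simp only [applyEvent, h]

lemma run_pstate_of_output (C : Config A) {σ : List (Event n)} {i : Fin n} {v : Bool}
    (hσ : Event.crash i ∉ σ) (h : A.output i (C.pstate i) = some v) :
    (run A input C σ).pstate i = C.pstate i := by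
  induction σ generalizing C with
  | nil => rfl
  | cons e σ ih =>
    rw [List.mem_cons, not_or] at hσ
    have hstay : (applyEvent A input C e).pstate i = C.pstate i := by
      by_cases he : eventBy {i} e
      · cases e with
        | crash j => exact absurd (congrArg Event.crash (Eq.symm he)) hσ.1
        | step j =>
          obtain rfl : j = i := he
          rw [applyEvent_step_of_pending_eq_none C (A.output_noop _ _ (by simp [h]))]
      · exact applyEvent_pstate_of_not_eventBy C he
    exact (ih _ hσ.2 (hstay ▸ h)).trans hstay

/-- `C` and `C'` are indistinguishable to the processes in `P`, and their objects have equal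
values, so that executions by `P` from `C` can be repeated from `C'`. -/
def Indist (P : Set (Fin n)) (C C' : Config A) : Prop :=
  C.oval = C'.oval ∧ ∀ j ∈ P, C.pstate j = C'.pstate j

lemma indist_singleton {C C' : Config A} {i : Fin n} :
    Indist {i} C C' ↔ C.oval = C'.oval ∧ C.pstate i = C'.pstate i := by
  simp [Indist]

lemma Indist.mono {P Q : Set (Fin n)} {C C' : Config A} (h : Indist Q C C') (hPQ : P ⊆ Q) :
    Indist P C C' :=
  ⟨h.1, fun j hj => h.2 j (hPQ hj)⟩

lemma Indist.symm {P : Set (Fin n)} {C C' : Config A} (h : Indist P C C') : Indist P C' C :=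
  ⟨h.1.symm, fun j hj => (h.2 j hj).symm⟩

lemma Indist.applyEvent {P : Set (Fin n)} {C C' : Config A} (h : Indist P C C') {e : Event n}
    (he : eventBy P e) : Indist P (applyEvent A input C e) (applyEvent A input C' e) := by
  obtain ⟨p, o⟩ := C
  obtain ⟨p', o'⟩ := C'
  obtain ⟨rfl, hp⟩ : o = o' ∧ ∀ j ∈ P, p j = p' j := h
  have hupdate : ∀ i (s : A.PState i), ∀ j ∈ P,
      Function.update p i s j = Function.update p' i s j := by
    intro i s j hj
    obtain rfl | hji := eq_or_ne j i
    · simp only [Function.update_self]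
    · simp only [Function.update_of_ne hji, hp j hj]
  cases e with
  | crash i => exact ⟨rfl, hupdate i _⟩
  | step i =>
    simp only [RecoverableConsensus.applyEvent, hp i he]
    split
    · exact ⟨rfl, hp⟩
    · exact ⟨rfl, hupdate i _⟩

lemma Indist.run {P : Set (Fin n)} {C C' : Config A} (h : Indist P C C') {σ : List (Event n)}
    (hσ : ∀ e ∈ σ, eventBy P e) : Indist P (run A input C σ) (run A input C' σ) := by
  induction σ generalizing C C' with
  | nil => exact h
  | cons e σ ih =>
    rw [List.forall_mem_cons] at hσ
    exact ih (h.applyEvent hσ.1) hσ.2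

lemma run_crashes_oval (C : Config A) (l : List (Fin n)) :
    (run A input C (l.map .crash)).oval = C.oval := by
  induction l generalizing C with
  | nil => rfl
  | cons i _ ih => exact ih _

lemma run_crashes_pstate_of_mem (C : Config A) {l : List (Fin n)} {j : Fin n} (hj : j ∈ l) :
    (run A input C (l.map .crash)).pstate j = A.init j (input j) := by
  induction l using List.reverseRecOn with
  | nil => simp at hj
  | append_singleton l i ih =>
    rw [List.map_append, run_append]
    obtain rfl | hji := eq_or_ne j i
    · exact Function.update_self ..
    · refine (Function.update_of_ne hji ..).trans (ih ?_)
      simpa [hji] using hj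

lemma mem_lambdaSched {k : Fin n} {e : Event n} :
    e ∈ lambdaSched n k ↔ ∃ j, k ≤ j ∧ .crash j = e := by
  simp [lambdaSched]

lemma eventBy_of_mem_lambdaSched {k : Fin n} : ∀ e ∈ lambdaSched n k, eventBy (Ici k) e := by
  intro e he
  obtain ⟨j, hj, rfl⟩ := mem_lambdaSched.mp he
  exact hj

lemma indist_Ici_run_lambdaSched {C C' : Config A} (h : C.oval = C'.oval) (k : Fin n) :
    Indist (Ici k) (run A input C (lambdaSched n k)) (run A input C' (lambdaSched n k)) := by
  refine ⟨by simpa only [lambdaSched, run_crashes_oval], fun j hj => ?_⟩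
  have hmem : j ∈ (List.finRange n).filter fun i => decide (k.val ≤ i.val) := by simpa using hj
  simp only [lambdaSched, run_crashes_pstate_of_mem _ hmem]

lemma indist_Iio_run_lambdaSched (C : Config A) (k : Fin n) :
    Indist (Iio k) (run A input C (lambdaSched n k)) C := by
  refine ⟨run_crashes_oval C _, fun j hj => run_pstate_of_not_eventBy C fun e he hej => ?_⟩
  obtain ⟨i, hi, rfl⟩ := mem_lambdaSched.mp he
  obtain rfl : i = j := hej
  exact hi.not_gt hj

/-- `C` is reachable from the initial configuration for the given input. -/
def Reachable (input : Fin n → Bool) (C : Config A) : Prop :=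
  ∃ σ, C = run A input (initConfig A input) σ

lemma reachable_initConfig : Reachable input (initConfig A input) :=
  ⟨[], rfl⟩

lemma Reachable.run {C : Config A} (h : Reachable input C) (σ : List (Event n)) :
    Reachable input (run A input C σ) := by
  obtain ⟨τ, rfl⟩ := h
  exact ⟨τ ++ σ, by rw [run_append]⟩

-- The cut is made at the last crash of `p_i`.
lemma Reachable.exists_run_of_init {C : Config A} (hC : Reachable input C) (i : Fin n) :
    ∃ (C₀ : Config A) (σ : List (Event n)), C₀.pstate i = A.init i (input i) ∧
      Event.crash i ∉ σ ∧ C = RecoverableConsensus.run A input C₀ σ := by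
  obtain ⟨σ, rfl⟩ := hC
  induction σ using List.reverseRecOn with
  | nil => exact ⟨initConfig A input, [], rfl, by simp, rfl⟩
  | append_singleton σ e ih =>
    obtain ⟨C₀, τ, hinit, hτ, hrun⟩ := ih
    by_cases he : e = Event.crash i
    · subst he
      exact ⟨_, [], by rw [run_append]; exact Function.update_self .., by simp, rfl⟩
    · exact ⟨C₀, τ ++ [e], hinit, by simp [hτ, Ne.symm he], by rw [run_append, run_append, hrun]⟩

/-- Recoverable wait-freedom for an infinite execution presented as the limit of finite executions
`σ 0 ⊑ σ 1 ⊑ ⋯`, where `σ (k + 1)` extends `σ k` by the block `ρ k`. -/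
lemma RecWaitFree.exists_hasDecided_of_chain (hW : RecWaitFree A) {C : Config A} {i : Fin n}
    (hC : C.pstate i = A.init i (input i)) {σ ρ : ℕ → List (Event n)}
    (hσ : ∀ k, σ (k + 1) = σ k ++ ρ k) (hρ : ∀ k, ρ k ≠ [])
    (hstep : ∃ᶠ k in atTop, Event.step i ∈ ρ k) (hcrash : ∀ᶠ k in atTop, Event.crash i ∉ ρ k) :
    ∃ k v, HasDecided A input C (σ k) i v := by
  obtain ⟨e, he⟩ := exists_limit_of_chain hσ hρ
  have hcrash' : ∀ᶠ m in atTop, e m ≠ Event.crash i :=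
    not_frequently.mp <| (frequently_eq_iff_frequently_mem hσ hρ he _).not.mpr <|
      not_frequently.mpr hcrash
  obtain ⟨k, v, hv⟩ := hW input C e i (.inl hC)
    (frequently_atTop.mp <| (frequently_eq_iff_frequently_mem hσ hρ he _).mpr hstep)
    (eventually_atTop.mp hcrash')
  refine ⟨k, v, initSeg e k, ?_, hv⟩
  have hk : k ≤ (σ k).length := (strictMono_length_of_chain hσ hρ).le_apply
  have : initSeg e k = (σ k).take k := by
    rw [he k, ← List.map_take, List.take_range, min_eq_left hk, initSeg]
  exact this ▸ List.take_prefix k _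

/-- Process `p_i`, running alone and without crashes from `C`, decides `v`. -/
def SoloDecides (input : Fin n → Bool) (C : Config A) (i : Fin n) (v : Bool) : Prop :=
  ∃ k, A.output i ((run A input C (List.replicate k (.step i))).pstate i) = some v

lemma Reachable.exists_soloDecides (hW : RecWaitFree A) {C : Config A} (hC : Reachable input C)
    (i : Fin n) : ∃ v, SoloDecides input C i v := by
  obtain ⟨C₀, σ, hinit, hσ, rfl⟩ := hC.exists_run_of_init i
  obtain ⟨k, v, τ, ⟨τ', hτ⟩, hv⟩ := hW.exists_hasDecided_of_chain hinit
    (σ := fun k => σ ++ List.replicate k (.step i)) (ρ := fun _ => [.step i])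
    (fun k => by simp [List.replicate_succ']) (by simp) (.of_forall (by simp)) (by simp)
  have hτ' : Event.crash i ∉ τ' := by
    intro hmem
    have : Event.crash i ∈ σ ++ List.replicate k (.step i) := hτ ▸ List.mem_append_right τ hmem
    simp [hσ] at this
  refine ⟨v, k, ?_⟩
  rw [← run_append, ← hτ, run_append, run_pstate_of_output _ hτ' hv, hv]

lemma eventBy_of_mem_replicate_step {P : Set (Fin n)} {i : Fin n} (hi : i ∈ P) {k : ℕ} :
    ∀ e ∈ List.replicate k (Event.step i), eventBy P e := by
  intro e he
  rw [List.eq_of_mem_replicate he]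
  exact hi

lemma SoloDecides.congr {C C' : Config A} {i : Fin n} {v : Bool} (h : SoloDecides input C i v)
    (hC : Indist {i} C C') : SoloDecides input C' i v := by
  obtain ⟨k, hk⟩ := h
  refine ⟨k, ?_⟩
  rwa [← (hC.run (eventBy_of_mem_replicate_step (mem_singleton i))).2 i rfl]

lemma SoloDecides.applyEvent_step {C : Config A} {i : Fin n} {v : Bool}
    (h : SoloDecides input C i v) : SoloDecides input (applyEvent A input C (.step i)) i v := by
  obtain ⟨k, hk⟩ := h
  refine ⟨k, ?_⟩
  change A.output i ((run A input C (.step i :: List.replicate k (.step i))).pstate i) = some v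
  rw [← List.replicate_succ, List.replicate_succ', run_append,
    run_pstate_of_output _ (by simp) hk, hk]

-- Only the input of the running process matters to a solo execution, so validity can be applied
-- with all inputs equal to it.
lemma soloDecides_initConfig (hV : Validity A) (hW : RecWaitFree A) (i : Fin n) :
    SoloDecides input (initConfig A input) i (input i) := by
  have hrun : ∀ (k : ℕ) (C : Config A),
      run A (fun _ => input i) C (List.replicate k (.step i)) =
        run A input C (List.replicate k (.step i)) := by
    intro k
    induction k with
    | zero => exact fun _ => rfl
    | succ _ ih => exact fun _ => ih _
  obtain ⟨v, k, hk⟩ :=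
    (reachable_initConfig (A := A) (input := fun _ => input i)).exists_soloDecides hW i
  obtain ⟨_, rfl⟩ := hV _ _ i v ⟨_, List.prefix_rfl, hk⟩
  have hsolo : SoloDecides input (initConfig A fun _ => input i) i (input i) :=
    ⟨k, by rwa [← hrun]⟩
  exact hsolo.congr (indist_singleton.mpr ⟨rfl, rfl⟩)

end Runs

/-! ### Crash budgets and valency -/

section Valency

variable {n : ℕ} {A : Algorithm n} {input : Fin n → Bool}

/-- With the crash budget `b`, the event `e` is legal and may leave the budget `b'`. A crash of
`p_i` consumes a unit of the budget of `p_i`; a step of `p_i` allows the budgets of the processes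
`p_j` with `i < j` to be reset to arbitrary values. Budgets may always be lowered. -/
def Legal : Event n → (Fin n → ℕ) → (Fin n → ℕ) → Prop
  | .step i, b, b' => ∀ j ≤ i, b' j ≤ b j
  | .crash i, b, b' => b' i < b i ∧ b' ≤ b

lemma Legal.mono {e : Event n} {b c b' : Fin n → ℕ} (h : Legal e b b') (hbc : b ≤ c) :
    Legal e c b' := by
  cases e with
  | step i => exact fun j hj => (h j hj).trans (hbc j)
  | crash i => exact ⟨h.1.trans_le (hbc i), h.2.trans hbc⟩

lemma Legal.apply_le {e : Event n} {b b' : Fin n → ℕ} (h : Legal e b b') {j : Fin n}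
    (hj : eventBy (Ici j) e) : b' j ≤ b j := by
  cases e with
  | step i => exact h j hj
  | crash i => exact h.2 j

/-- Some process is in an output state for `v` after some sequence of events that is legal from `C`
with the crash budget `b`. -/
inductive CanDecide (input : Fin n → Bool) (v : Bool) : Config A → (Fin n → ℕ) → Prop
  | output {C : Config A} {b : Fin n → ℕ} {i : Fin n} :
      A.output i (C.pstate i) = some v → CanDecide input v C b
  | event {C : Config A} {b b' : Fin n → ℕ} {e : Event n} :
      Legal e b b' → CanDecide input v (applyEvent A input C e) b' → CanDecide input v C b

lemma CanDecide.mono {v : Bool} {C : Config A} {b c : Fin n → ℕ} (h : CanDecide input v C b)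
    (hbc : b ≤ c) : CanDecide input v C c := by
  cases h with
  | output h => exact .output h
  | event hl h => exact .event (hl.mono hbc) h

lemma CanDecide.exists_run {v : Bool} {C : Config A} {b : Fin n → ℕ}
    (h : CanDecide input v C b) : ∃ ρ i, A.output i ((run A input C ρ).pstate i) = some v := by
  induction h with
  | output h => exact ⟨[], _, h⟩
  | event _ _ ih =>
    obtain ⟨ρ, i, h⟩ := ih
    exact ⟨_ :: ρ, i, h⟩

lemma CanDecide.eq_of_hasDecided (hA : Agreement A) {v w : Bool} {σ : List (Event n)}
    {b : Fin n → ℕ} {i : Fin n} (h : CanDecide input w (run A input (initConfig A input) σ) b)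
    (hd : HasDecided A input (initConfig A input) σ i v) : v = w := by
  obtain ⟨ρ, j, hj⟩ := h.exists_run
  obtain ⟨τ, hτ, hi⟩ := hd
  rw [← run_append] at hj
  exact hA input (σ ++ ρ) i j v w ⟨τ, hτ.trans (List.prefix_append _ _), hi⟩
    ⟨σ ++ ρ, List.prefix_rfl, hj⟩

lemma canDecide_of_run {v : Bool} {i : Fin n} {ρ : List (Event n)} {C : Config A}
    {b : Fin n → ℕ} (hb : ∀ j, Event.crash j ∈ ρ → ρ.length ≤ b j)
    (h : A.output i ((run A input C ρ).pstate i) = some v) : CanDecide input v C b := by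
  induction ρ generalizing C b with
  | nil => exact .output h
  | cons e ρ ih =>
    simp only [List.mem_cons, List.length_cons] at hb
    cases e with
    | step j =>
      exact .event (e := .step j) (b' := b) (fun _ _ => le_rfl)
        (ih (fun l hl => (Nat.le_succ _).trans (hb l (.inr hl))) h)
    | crash j =>
      exact .event (e := .crash j) (b' := fun l => b l - 1)
        ⟨Nat.sub_one_lt_of_lt (hb j (.inl rfl)), fun _ => Nat.sub_le _ _⟩
        (ih (fun l hl => Nat.le_sub_one_of_lt (hb l (.inr hl))) h)

lemma SoloDecides.canDecide {C : Config A} {i : Fin n} {v : Bool} (h : SoloDecides input C i v)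
    (b : Fin n → ℕ) : CanDecide input v C b := by
  obtain ⟨k, hk⟩ := h
  exact canDecide_of_run (by simp) hk

/-- Both values can still be decided from `C` with the crash budget `b`. -/
def Bivalent (input : Fin n → Bool) (C : Config A) (b : Fin n → ℕ) : Prop :=
  ∀ v, CanDecide input v C b

lemma bivalent_of_ne {C : Config A} {b : Fin n → ℕ} {v w : Bool} (hvw : v ≠ w)
    (hv : CanDecide input v C b) (hw : CanDecide input w C b) : Bivalent input C b := by
  obtain rfl := Bool.eq_not_of_ne hvw.symm
  intro u
  obtain rfl | rfl := Bool.eq_or_eq_not u v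
  exacts [hv, hw]

/-- The value `v` can be decided from `C` with the crash budget `b` after a first step by `p_i`. -/
def StepCanDecide (input : Fin n → Bool) (v : Bool) (C : Config A) (b : Fin n → ℕ)
    (i : Fin n) : Prop :=
  ∃ c, Legal (.step i) b c ∧ CanDecide input v (applyEvent A input C (.step i)) c

lemma SoloDecides.stepCanDecide {C : Config A} {i : Fin n} {v : Bool}
    (h : SoloDecides input C i v) (b : Fin n → ℕ) : StepCanDecide input v C b i :=
  ⟨b, fun _ _ => le_rfl, h.applyEvent_step.canDecide b⟩

-- The step of `p_m` resets the budgets of all processes beyond it.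
lemma stepCanDecide_of_canDecide {v : Bool} {C : Config A} {b b' : Fin n → ℕ} {h m : Fin n}
    {t : List (Fin n)} (hm : m ∈ h :: t) (hb : ∀ j ≤ m, b' j ≤ b j)
    (hv : CanDecide input v (run A input C ((h :: t).map .step)) b') :
    StepCanDecide input v C b h := by
  induction t generalizing C b h m with
  | nil =>
    obtain rfl := List.mem_singleton.mp hm
    exact ⟨b', hb, hv⟩
  | cons h' t ih =>
    obtain ⟨b₁, hl, m', hm', hb'⟩ :
        ∃ b₁, Legal (.step h) b b₁ ∧ ∃ m' ∈ h' :: t, ∀ j ≤ m', b' j ≤ b₁ j := by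
      rcases List.mem_cons.mp hm with rfl | hm'
      · exact ⟨b', hb, h', List.mem_cons_self, fun _ _ => le_rfl⟩
      · exact ⟨b, fun _ _ => le_rfl, m, hm', hb⟩
    obtain ⟨b₂, hl₂, hv₂⟩ := ih (C := applyEvent A input C (.step h)) hm' hb' hv
    exact ⟨b₁, hl, .event hl₂ hv₂⟩

lemma stepCanDecide_of_run {v : Bool} {C : Config A} {b : Fin n → ℕ} {h m i : Fin n}
    {t : List (Fin n)} (hm : m ∈ h :: t) {ρ : List (Event n)}
    (hρ : ∀ j, Event.crash j ∈ ρ → m < j)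
    (hv : A.output i ((run A input (run A input C ((h :: t).map .step)) ρ).pstate i) = some v) :
    StepCanDecide input v C b h := by
  refine stepCanDecide_of_canDecide (b' := fun j => if j ≤ m then b j else ρ.length) hm
    (fun j hj => (if_pos hj).le) (canDecide_of_run (fun j hj => ?_) hv)
  exact (if_neg (hρ j hj).not_ge).ge

/-- `p_i` is on team `x`: only `x` can be decided from `C` with the budget `b` after a first step by
`p_i`. -/
def InTeam (input : Fin n → Bool) (C : Config A) (b : Fin n → ℕ) (x : Bool) (i : Fin n) : Prop :=
  ∀ w, StepCanDecide input w C b i → w = x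

lemma InTeam.soloDecides (hW : RecWaitFree A) {C : Config A} (hC : Reachable input C)
    {b : Fin n → ℕ} {x : Bool} {i : Fin n} (h : InTeam input C b x i) :
    SoloDecides input C i x := by
  obtain ⟨v, hv⟩ := hC.exists_soloDecides hW i
  obtain rfl := h v (hv.stepCanDecide b)
  exact hv

lemma InTeam.eq (hW : RecWaitFree A) {C : Config A} (hC : Reachable input C) {b : Fin n → ℕ}
    {x y : Bool} {i : Fin n} (hx : InTeam input C b x i) (hy : InTeam input C b y i) : x = y :=
  hy x ((hx.soloDecides hW hC).stepCanDecide b)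

lemma InTeam.eq_of_soloDecides {C : Config A} {b : Fin n → ℕ} {x w : Bool} {h i : Fin n}
    {t : List (Fin n)} (hx : InTeam input C b x h)
    (hw : SoloDecides input (run A input C ((h :: t).map .step)) i w) : w = x := by
  obtain ⟨k, hk⟩ := hw
  exact hx w (stepCanDecide_of_run List.mem_cons_self (by simp) hk)

lemma SoloDecides.congr_steps {C : Config A} {i : Fin n} {v : Bool} {s s' : List (Fin n)}
    (h : SoloDecides input (run A input C (s.map .step)) i v) (hs : i ∉ s) (hs' : i ∉ s')
    (heq : (run A input C (s.map .step)).oval = (run A input C (s'.map .step)).oval) :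
    SoloDecides input (run A input C (s'.map .step)) i v :=
  h.congr <| indist_singleton.mpr ⟨heq, by
    rw [run_steps_pstate_of_notMem C hs, run_steps_pstate_of_notMem C hs']⟩

/-- In executions from `C` by the processes of `P`, which may crash arbitrarily often, these
processes decide no value other than `x`. -/
def OnlyDecides (input : Fin n → Bool) (P : Set (Fin n)) (x : Bool) (C : Config A) : Prop :=
  ∀ ρ : List (Event n), (∀ e ∈ ρ, eventBy P e) → ∀ i ∈ P, ∀ w,
    A.output i ((run A input C ρ).pstate i) = some w → w = x

lemma eventBy_mono {P Q : Set (Fin n)} (hPQ : P ⊆ Q) {e : Event n} (h : eventBy P e) :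
    eventBy Q e := by
  cases e <;> exact hPQ h

lemma OnlyDecides.mono {P Q : Set (Fin n)} {x : Bool} {C : Config A}
    (h : OnlyDecides input Q x C) (hPQ : P ⊆ Q) : OnlyDecides input P x C :=
  fun ρ hρ i hi => h ρ (fun e he => eventBy_mono hPQ (hρ e he)) i (hPQ hi)

lemma OnlyDecides.run {P : Set (Fin n)} {x : Bool} {C : Config A} (h : OnlyDecides input P x C)
    {σ : List (Event n)} (hσ : ∀ e ∈ σ, eventBy P e) :
    OnlyDecides input P x (run A input C σ) := by
  intro ρ hρ
  rw [← run_append]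
  exact h _ (List.forall_mem_append.mpr ⟨hσ, hρ⟩)

lemma OnlyDecides.congr {P : Set (Fin n)} {x : Bool} {C C' : Config A}
    (h : OnlyDecides input P x C) (hC : Indist P C C') : OnlyDecides input P x C' := by
  intro ρ hρ i hi
  rw [← (hC.run hρ).2 i hi]
  exact h ρ hρ i hi

lemma OnlyDecides.run_lambdaSched {k : Fin n} {x : Bool} {C C' : Config A}
    (h : OnlyDecides input (Ici k) x C) (hC : C.oval = C'.oval) :
    OnlyDecides input (Ici k) x (RecoverableConsensus.run A input C' (lambdaSched n k)) :=
  (h.run eventBy_of_mem_lambdaSched).congr (indist_Ici_run_lambdaSched hC k)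

lemma OnlyDecides.eq_of_soloDecides {P : Set (Fin n)} {x w : Bool} {C : Config A} {i : Fin n}
    (h : OnlyDecides input P x C) (hi : i ∈ P) (hw : SoloDecides input C i w) : w = x := by
  obtain ⟨k, hk⟩ := hw
  exact h _ (eventBy_of_mem_replicate_step hi) i hi w hk

lemma OnlyDecides.soloDecides (hW : RecWaitFree A) {P : Set (Fin n)} {x : Bool} {C : Config A}
    (hC : Reachable input C) (h : OnlyDecides input P x C) {i : Fin n} (hi : i ∈ P) :
    SoloDecides input C i x := by
  obtain ⟨v, hv⟩ := hC.exists_soloDecides hW i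
  obtain rfl := h.eq_of_soloDecides hi hv
  exact hv

-- Once `p_k, …, p_{n-1}` have crashed, they see nothing but the objects.
lemma OnlyDecides.eq_of_oval_eq (hW : RecWaitFree A) {k : Fin n} {x y : Bool} {C C' : Config A}
    (hC' : Reachable input C') (hx : OnlyDecides input (Ici k) x C)
    (hy : OnlyDecides input (Ici k) y C') (heq : C.oval = C'.oval) : x = y :=
  (hy.run_lambdaSched rfl).eq_of_soloDecides self_mem_Ici
    ((hx.run_lambdaSched heq).soloDecides hW (hC'.run _) self_mem_Ici)

lemma InTeam.onlyDecides {C : Config A} {b : Fin n → ℕ} {x : Bool} {h m : Fin n}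
    {t : List (Fin n)} {P : Set (Fin n)} (hx : InTeam input C b x h) (hm : m ∈ h :: t)
    (hP : ∀ j ∈ P, m < j) : OnlyDecides input P x (run A input C ((h :: t).map .step)) :=
  fun _ hρ _ _ w hw => hx w (stepCanDecide_of_run hm (fun j hj => hP j (hρ _ hj)) hw)

/-- A bivalent pair (configuration, budget) none of whose legal successors is bivalent. -/
def IsCritical (input : Fin n → Bool) (C : Config A) (b : Fin n → ℕ) : Prop :=
  Bivalent input C b ∧ ∀ e b', Legal e b b' → ¬ Bivalent input (applyEvent A input C e) b'

lemma IsCritical.inTeam {C : Config A} {b : Fin n → ℕ} (hcrit : IsCritical input C b) {v : Bool}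
    {i : Fin n} (h : StepCanDecide input v C b i) : InTeam input C b v i := by
  rintro w ⟨b₂, hb₂, hw⟩
  obtain ⟨b₁, hb₁, hv⟩ := h
  by_contra hwv
  exact hcrit.2 (.step i) (b₁ ⊔ b₂) (fun j hj => sup_le (hb₁ j hj) (hb₂ j hj))
    (bivalent_of_ne hwv (hw.mono le_sup_right) (hv.mono le_sup_left))

lemma IsCritical.exists_team (hW : RecWaitFree A) {C : Config A} (hC : Reachable input C)
    {b : Fin n → ℕ} (hcrit : IsCritical input C b) :
    ∃ team : Fin n → Bool, ∀ i, InTeam input C b (team i) i := by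
  choose team hteam using hC.exists_soloDecides hW
  exact ⟨team, fun i => hcrit.inTeam ((hteam i).stepCanDecide b)⟩

-- If an execution deciding `x` begins with a crash, then `p_z` does not notice this crash, so that
-- `p_z` is on team `x`.
lemma IsCritical.exists_inTeam (hA : Agreement A) (hW : RecWaitFree A) {C : Config A}
    (hC : Reachable input C) {b : Fin n → ℕ} (hcrit : IsCritical input C b) {z : Fin n}
    (hbz : b z = 0) (x : Bool) : ∃ i, InTeam input C b x i := by
  obtain ⟨w, hw⟩ := hC.exists_soloDecides hW z
  obtain rfl | hwx := eq_or_ne w x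
  · exact ⟨z, hcrit.inTeam (hw.stepCanDecide b)⟩
  cases hcrit.1 x with
  | output hx =>
    obtain ⟨σ, rfl⟩ := hC
    exact absurd ((hcrit.1 w).eq_of_hasDecided hA ⟨σ, List.prefix_rfl, hx⟩) hwx.symm
  | @event _ _ b' e hl hx =>
    cases e with
    | step i => exact ⟨i, hcrit.inTeam ⟨b', hl, hx⟩⟩
    | crash i =>
      have hzi : z ≠ i := by
        rintro rfl
        exact absurd hl.1 (by simp [hbz])
      have hw' : SoloDecides input (applyEvent A input C (.crash i)) z w :=
        hw.congr (indist_singleton.mpr ⟨rfl, (Function.update_of_ne hzi ..).symm⟩)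
      exact absurd (bivalent_of_ne hwx (hw'.canDecide b') hx) (hcrit.2 _ b' hl)

end Valency

/-! ### Well-foundedness of bivalent extensions -/

section Moves

variable {n : ℕ} {A : Algorithm n} {input : Fin n → Bool}

/-- `p_i` pays for the block `ρ` of events: it takes a step in `ρ` and only processes beyond it
crash in `ρ`, whether before or after this step. These crashes need not be covered by the budget
`b`. -/
def Pays (i : Fin n) (ρ : List (Event n)) (b b' : Fin n → ℕ) : Prop :=
  Event.step i ∈ ρ ∧ (∀ j, Event.crash j ∈ ρ → i < j) ∧ ∀ j ≤ i, b' j ≤ b j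

/-- The block `ρ` of events may turn the budget `b` into `b'`: either some process pays for it, or
it is a single legal crash. -/
def LegalBlock (ρ : List (Event n)) (b b' : Fin n → ℕ) : Prop :=
  (∃ i, Pays i ρ b b') ∨ ∃ i, ρ = [.crash i] ∧ Legal (.crash i) b b'

lemma LegalBlock.ne_nil {ρ : List (Event n)} {b b' : Fin n → ℕ} (h : LegalBlock ρ b b') :
    ρ ≠ [] := by
  rcases h with ⟨i, hi, -⟩ | ⟨i, rfl, -⟩
  · exact List.ne_nil_of_mem hi
  · exact List.cons_ne_nil _ _

lemma exists_frequently_pays {ρ : ℕ → List (Event n)} {b : ℕ → Fin n → ℕ}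
    (h : ∀ k, LegalBlock (ρ k) (b k) (b (k + 1))) :
    ∃ᶠ k in atTop, ∃ i, Pays i (ρ k) (b k) (b (k + 1)) := by
  intro hnone
  have hlt : ∀ᶠ k in atTop, b (k + 1) < b k := hnone.mono fun k hk => by
    obtain ⟨i, -, hi, hle⟩ := (h k).resolve_left hk
    exact Pi.lt_def.mpr ⟨hle, i, hi⟩
  obtain ⟨k, hk, hk'⟩ := ((eventually_not_succ_lt (hlt.mono fun _ => le_of_lt)).and hlt).exists
  exact hk hk'

-- The smallest process that pays infinitely often has this property: from some point on its budget
-- never increases, and each of its crashes decreases it.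
lemma exists_frequently_step_eventually_not_crash {ρ : ℕ → List (Event n)} {b : ℕ → Fin n → ℕ}
    (h : ∀ k, LegalBlock (ρ k) (b k) (b (k + 1))) :
    ∃ i, (∃ᶠ k in atTop, Event.step i ∈ ρ k) ∧ ∀ᶠ k in atTop, Event.crash i ∉ ρ k := by
  obtain ⟨i, hi, hleast⟩ := exists_least_frequently (exists_frequently_pays h)
  have hbudget : ∀ᶠ k in atTop,
      b (k + 1) i ≤ b k i ∧ (Event.crash i ∈ ρ k → b (k + 1) i < b k i) := by
    refine hleast.mono fun k hk => ?_
    rcases h k with ⟨j, hj⟩ | ⟨j, hρ, hlt, hle⟩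
    · have hij : i ≤ j := not_lt.mp fun hji => hk j hji hj
      exact ⟨hj.2.2 i hij, fun hc => absurd (hj.2.1 i hc) hij.not_gt⟩
    · refine ⟨hle i, fun hc => ?_⟩
      obtain rfl : i = j := by simpa [hρ] using hc
      exact hlt
  refine ⟨i, hi.mono fun k hk => hk.1, ?_⟩
  filter_upwards [hbudget, eventually_not_succ_lt (f := fun k => b k i)
    (hbudget.mono fun k hk => hk.1)] with k hk hstable hc
  exact hstable (hk.2 hc)

/-- The pair `s'` (configuration, budget) is obtained from `s` by a legal block of events. -/
def Move (input : Fin n → Bool) (s s' : Config A × (Fin n → ℕ)) : Prop :=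
  ∃ ρ, s'.1 = run A input s.1 ρ ∧ LegalBlock ρ s.2 s'.2

lemma move_of_legal {C : Config A} {e : Event n} {b b' : Fin n → ℕ} (h : Legal e b b') :
    Move input (C, b) (applyEvent A input C e, b') := by
  refine ⟨[e], rfl, ?_⟩
  cases e with
  | step i => exact .inl ⟨i, by simp, by simp, h⟩
  | crash i => exact .inr ⟨i, rfl, h⟩

lemma wellFounded_move (hA : Agreement A) (hW : RecWaitFree A) :
    WellFounded fun s' s : Config A × (Fin n → ℕ) =>
      Reachable input s.1 ∧ Bivalent input s.1 s.2 ∧ Move input s s' := by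
  refine wellFounded_iff_isEmpty_descending_chain.mpr ⟨fun ⟨s, hs⟩ => ?_⟩
  choose ρ hrun hblock using fun k => (hs k).2.2
  obtain ⟨σ₀, hσ₀⟩ := (hs 0).1
  let σ : ℕ → List (Event n) := fun k => Nat.rec σ₀ (fun k τ => τ ++ ρ k) k
  have hσ : ∀ k, σ (k + 1) = σ k ++ ρ k := fun _ => rfl
  have hs_eq : ∀ k, (s k).1 = run A input (initConfig A input) (σ k) := by
    intro k
    induction k with
    | zero => exact hσ₀
    | succ k ih => rw [hrun, hσ, run_append, ih]
  obtain ⟨i, hstep, hcrash⟩ := exists_frequently_step_eventually_not_crash hblock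
  obtain ⟨k, v, hv⟩ := hW.exists_hasDecided_of_chain (C := initConfig A input) rfl hσ
    (fun k => (hblock k).ne_nil) hstep hcrash
  have hbiv := (hs k).2.1 (!v)
  rw [hs_eq] at hbiv
  exact absurd (hbiv.eq_of_hasDecided hA hv) (by simp)

end Moves

/-! ### Critical configurations -/

section CriticalConfigurations

variable {n : ℕ} {A : Algorithm n} {input : Fin n → Bool}

lemma exists_bivalent_init (hV : Validity A) (hW : RecWaitFree A) {z l : Fin n} (hzl : z ≠ l)
    (b : Fin n → ℕ) : ∃ input, Bivalent input (initConfig A input) b := by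
  refine ⟨fun i => decide (i = z), bivalent_of_ne ?_
    ((soloDecides_initConfig hV hW z).canDecide b) ((soloDecides_initConfig hV hW l).canDecide b)⟩
  simp [hzl.symm]

lemma exists_isCritical_of_validity (hA : Agreement A) (hV : Validity A) (hW : RecWaitFree A)
    {z l : Fin n} (hz : IsBot z) (hzl : z ≠ l) :
    ∃ (input : Fin n → Bool) (C : Config A) (b : Fin n → ℕ), Reachable input C ∧ b z = 0 ∧
      IsCritical input C b ∧
      ∀ s', Bivalent input s'.1 s'.2 → s'.2 z = 0 → ¬ Move input (C, b) s' := by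
  obtain ⟨input, hinit⟩ := exists_bivalent_init hV hW hzl 0
  obtain ⟨⟨C, b⟩, ⟨hC, hbiv, hbz⟩, hleast⟩ := (wellFounded_move (input := input) hA hW).has_min
    {s | Reachable input s.1 ∧ Bivalent input s.1 s.2 ∧ s.2 z = 0}
    ⟨(initConfig A input, 0), reachable_initConfig, hinit, rfl⟩
  have hmin : ∀ s', Bivalent input s'.1 s'.2 → s'.2 z = 0 → ¬ Move input (C, b) s' := by
    intro s' hbiv' hz' hmove
    obtain ⟨ρ, hρ, -⟩ := id hmove
    exact hleast s' ⟨hρ ▸ hC.run ρ, hbiv', hz'⟩ ⟨hC, hbiv, hmove⟩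
  refine ⟨input, C, b, hC, hbz, ⟨hbiv, fun e b' hl hbiv' => ?_⟩, hmin⟩
  have he : eventBy (Ici z) e := by cases e <;> exact hz _
  exact hmin _ hbiv' (Nat.eq_zero_of_le_zero ((hl.apply_le he).trans_eq hbz)) (move_of_legal hl)

lemma PoisedAt.unique {C : Config A} {i : Fin n} {O O' : A.ObjIdx} (h : PoisedAt A C i O)
    (h' : PoisedAt A C i O') : O = O' := by
  obtain ⟨op, h⟩ := h
  obtain ⟨op', h'⟩ := h'
  exact congrArg Sigma.fst (Option.some.inj (h.symm.trans h'))

lemma steps_comm (C : Config A) {i j : Fin n} (hij : i ≠ j)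
    (h : ∀ O, PoisedAt A C i O → ¬ PoisedAt A C j O) :
    applyEvent A input (applyEvent A input C (.step i)) (.step j) =
      applyEvent A input (applyEvent A input C (.step j)) (.step i) := by
  rcases hi : A.pending i (C.pstate i) with _ | ⟨o, op⟩
  · rw [applyEvent_step_of_pending_eq_none C hi, applyEvent_step_of_pending_eq_none (i := i)]
    rwa [applyEvent_pstate_of_not_eventBy C (e := .step j) hij.symm]
  rcases hj : A.pending j (C.pstate j) with _ | ⟨o', op'⟩
  · rw [applyEvent_step_of_pending_eq_none C hj, applyEvent_step_of_pending_eq_none (i := j)]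
    rwa [applyEvent_pstate_of_not_eventBy C (e := .step i) hij]
  have ho : o ≠ o' := by
    rintro rfl
    exact h o ⟨op, hi⟩ ⟨op', hj⟩
  classical
  simp only [applyEvent, hi, hj, Function.update_of_ne hij, Function.update_of_ne hij.symm,
    Function.update_of_ne ho, Function.update_of_ne ho.symm]
  rw [Function.update_comm hij.symm, Function.update_comm ho.symm]

lemma InTeam.exists_poisedAt (hW : RecWaitFree A) {C : Config A} (hC : Reachable input C)
    {b : Fin n → ℕ} {x y : Bool} {i j : Fin n} (hxy : x ≠ y) (hi : InTeam input C b x i)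
    (hj : InTeam input C b y j) : ∃ O, PoisedAt A C i O ∧ PoisedAt A C j O := by
  by_contra! hcon
  have hij : i ≠ j := by
    rintro rfl
    exact hxy (hi.eq hW hC hj)
  have hcomm : run A input C ([i, j].map .step) = run A input C ([j, i].map .step) :=
    steps_comm C hij hcon
  obtain ⟨w, hw⟩ := (hC.run ([i, j].map .step)).exists_soloDecides hW i
  exact hxy ((hi.eq_of_soloDecides hw).symm.trans (hj.eq_of_soloDecides (hcomm ▸ hw)))

lemma exists_forall_poisedAt (hW : RecWaitFree A) {C : Config A} (hC : Reachable input C)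
    {b : Fin n → ℕ} {team : Fin n → Bool} (hteam : ∀ i, InTeam input C b (team i) i)
    (hne : ∀ x, ∃ i, team i = x) : ∃ O, ∀ i, PoisedAt A C i O := by
  obtain ⟨i₀, hi₀⟩ := hne false
  obtain ⟨i₁, hi₁⟩ := hne true
  obtain ⟨O, hO₀, hO₁⟩ :=
    (hteam i₀).exists_poisedAt hW hC (by simp [hi₀, hi₁]) (hteam i₁)
  have hopposite : ∀ m, ∃ j, PoisedAt A C j O ∧ team m ≠ team j := by
    intro m
    cases hm : team m with
    | false => exact ⟨i₁, hO₁, by simp [hi₁]⟩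
    | true => exact ⟨i₀, hO₀, by simp [hi₀]⟩
  refine ⟨O, fun m => ?_⟩
  obtain ⟨j, hj, hmj⟩ := hopposite m
  obtain ⟨O', hm', hj'⟩ := (hteam m).exists_poisedAt hW hC hmj (hteam j)
  exact hj.unique hj' ▸ hm'

lemma run_steps_oval [DecidableEq A.ObjIdx] {C : Config A} {O : A.ObjIdx}
    {op : Fin n → (A.objType O).Op} {s : List (Fin n)} (hs : s.Nodup)
    (hop : ∀ m ∈ s, A.pending m (C.pstate m) = some ⟨O, op m⟩) :
    (run A input C (s.map .step)).oval =
      Function.update C.oval O (applyOps (A.objType O) op (C.oval O) s) := by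
  induction s generalizing C with
  | nil => exact (Function.update_eq_self O C.oval).symm
  | cons i s ih =>
    obtain ⟨his, hs⟩ := List.nodup_cons.mp hs
    rw [List.forall_mem_cons] at hop
    have hop' : ∀ m ∈ s,
        A.pending m ((applyEvent A input C (.step i)).pstate m) = some ⟨O, op m⟩ := by
      intro m hm
      have him : i ≠ m := fun h => his (h ▸ hm)
      rw [applyEvent_pstate_of_not_eventBy C (e := .step i) him]
      exact hop.2 m hm
    have hoval : (applyEvent A input C (.step i)).oval =
        Function.update C.oval O ((A.objType O).δ (C.oval O) (op i)).2 := by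
      simp only [applyEvent, hop.1]
      congr!
    refine (ih hs hop').trans ?_
    rw [hoval, Function.update_idem, Function.update_self]
    rfl

/-- The first obstruction to an `n`-recording type at a critical configuration: some schedule that
contains `p_z` and starts on the team opposite to that of `p_l` leaves the objects as a single step
by `p_l` does. -/
def Merging (input : Fin n → Bool) (z l : Fin n) (C : Config A) (b : Fin n → ℕ) : Prop :=
  ∃ (x y : Bool) (h : Fin n) (t : List (Fin n)), x ≠ y ∧ InTeam input C b x h ∧
    InTeam input C b y l ∧ z ∈ h :: t ∧
    (run A input C ((h :: t).map .step)).oval = (applyEvent A input C (.step l)).oval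

/-- The second obstruction to an `n`-recording type at a critical configuration: some schedule
leaves the objects unchanged, and the team on which it does not start has two members
`p_{i₀}` and `p_{i₁}`. -/
def Hiding (input : Fin n → Bool) (C : Config A) (b : Fin n → ℕ) : Prop :=
  ∃ (x y : Bool) (h : Fin n) (t : List (Fin n)) (i₀ i₁ : Fin n), x ≠ y ∧ i₀ < i₁ ∧
    InTeam input C b x h ∧ InTeam input C b y i₀ ∧ InTeam input C b y i₁ ∧
    (run A input C ((h :: t).map .step)).oval = C.oval

lemma InTeam.eq_of_run_oval_eq (hW : RecWaitFree A) {C : Config A} (hC : Reachable input C)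
    {b : Fin n → ℕ} {x y : Bool} {h₀ h₁ m₀ m₁ k : Fin n} {t₀ t₁ : List (Fin n)}
    (hx : InTeam input C b x h₀) (hy : InTeam input C b y h₁)
    (heq : (run A input C ((h₀ :: t₀).map .step)).oval =
      (run A input C ((h₁ :: t₁).map .step)).oval)
    (hm₀ : m₀ ∈ h₀ :: t₀) (hm₀k : m₀ < k) (hm₁ : m₁ ∈ h₁ :: t₁) (hm₁k : m₁ < k) : x = y :=
  (hx.onlyDecides hm₀ fun _ hj => hm₀k.trans_le hj).eq_of_oval_eq hW (hC.run _)
    (hy.onlyDecides hm₁ fun _ hj => hm₁k.trans_le hj) heq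

lemma InTeam.eq_of_notMem (hW : RecWaitFree A) {C : Config A} (hC : Reachable input C)
    {b : Fin n → ℕ} {x y : Bool} {h₀ h₁ i : Fin n} {t₀ t₁ : List (Fin n)}
    (hx : InTeam input C b x h₀) (hy : InTeam input C b y h₁)
    (heq : (run A input C ((h₀ :: t₀).map .step)).oval =
      (run A input C ((h₁ :: t₁).map .step)).oval)
    (hi₀ : i ∉ h₀ :: t₀) (hi₁ : i ∉ h₁ :: t₁) : x = y := by
  obtain ⟨w, hw⟩ := (hC.run ((h₀ :: t₀).map .step)).exists_soloDecides hW i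
  exact (hx.eq_of_soloDecides hw).symm.trans
    (hy.eq_of_soloDecides (hw.congr_steps hi₀ hi₁ heq))

lemma merging_of_mem (hW : RecWaitFree A) {C : Config A} (hC : Reachable input C)
    {b : Fin n → ℕ} {x y : Bool} {z l h₀ h₁ : Fin n} {t₀ t₁ : List (Fin n)} (hl : IsTop l)
    (hzl : z < l) (hxy : x ≠ y) (hx : InTeam input C b x h₀) (hy : InTeam input C b y h₁)
    (hn₁ : (h₁ :: t₁).Nodup)
    (heq : (run A input C ((h₀ :: t₀).map .step)).oval =
      (run A input C ((h₁ :: t₁).map .step)).oval)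
    (hz : z ∈ h₀ :: t₀) : Merging input z l C b := by
  have hall : ∀ m ∈ h₁ :: t₁, m = l := by
    intro m hm
    by_contra hml
    exact hxy (hx.eq_of_run_oval_eq hW hC hy heq hz hzl hm ((hl m).lt_of_ne hml))
  obtain ⟨rfl, ht₁⟩ := List.forall_mem_cons.mp hall
  obtain rfl : t₁ = [] := List.eq_nil_iff_forall_not_mem.mpr fun m hm =>
    (List.nodup_cons.mp hn₁).1 (ht₁ m hm ▸ hm)
  exact ⟨x, y, h₀, t₀, hxy, hx, hy, hz, heq⟩

lemma merging_of_run_oval_eq (hW : RecWaitFree A) {C : Config A} (hC : Reachable input C)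
    {b : Fin n → ℕ} {x y : Bool} {z l h₀ h₁ : Fin n} {t₀ t₁ : List (Fin n)} (hl : IsTop l)
    (hzl : z < l) (hxy : x ≠ y) (hx : InTeam input C b x h₀) (hy : InTeam input C b y h₁)
    (hn₀ : (h₀ :: t₀).Nodup) (hn₁ : (h₁ :: t₁).Nodup)
    (heq : (run A input C ((h₀ :: t₀).map .step)).oval =
      (run A input C ((h₁ :: t₁).map .step)).oval) : Merging input z l C b := by
  by_cases hz₀ : z ∈ h₀ :: t₀
  · exact merging_of_mem hW hC hl hzl hxy hx hy hn₁ heq hz₀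
  by_cases hz₁ : z ∈ h₁ :: t₁
  · exact merging_of_mem hW hC hl hzl hxy.symm hy hx hn₀ heq.symm hz₁
  exact absurd (hx.eq_of_notMem hW hC hy heq hz₀ hz₁) hxy

lemma IsCritical.exists_nRecording (hA : Agreement A) (hW : RecWaitFree A) {C : Config A}
    (hC : Reachable input C) {b : Fin n → ℕ} (hcrit : IsCritical input C b) {z l : Fin n}
    (hl : IsTop l) (hzl : z < l) (hbz : b z = 0) (hmerging : ¬ Merging input z l C b)
    (hhiding : ¬ Hiding input C b) : ∃ O, NRecording n (A.objType O) := by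
  classical
  obtain ⟨team, hteam⟩ := hcrit.exists_team hW hC
  have hne : ∀ x, ∃ i, team i = x := by
    intro x
    obtain ⟨i, hi⟩ := hcrit.exists_inTeam hA hW hC hbz x
    exact ⟨i, (hteam i).eq hW hC hi⟩
  obtain ⟨O, hO⟩ := exists_forall_poisedAt hW hC hteam hne
  choose op hop using hO
  have hrun : ∀ s : List (Fin n), s.Nodup → (run A input C (s.map .step)).oval =
      Function.update C.oval O (applyOps (A.objType O) op (C.oval O) s) :=
    fun s hs => run_steps_oval hs fun m _ => hop m
  refine ⟨O, C.oval O, team, op, hne, eq_empty_iff_forall_notMem.mpr ?_, ?_⟩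
  · rintro w ⟨⟨h₀, t₀, hh₀, hn₀, hw₀⟩, ⟨h₁, t₁, hh₁, hn₁, hw₁⟩⟩
    exact hmerging <| merging_of_run_oval_eq hW hC hl hzl (by simp [hh₀, hh₁]) (hteam h₀)
      (hteam h₁) hn₀ hn₁ (by rw [hrun _ hn₀, hrun _ hn₁, ← hw₀, ← hw₁])
  · rintro x ⟨h, t, rfl, hn, hu⟩
    have hunique : ∀ i₀ i₁, i₀ < i₁ → team i₀ = !team h → team i₁ ≠ !team h := by
      intro i₀ i₁ hlt hi₀ hi₁
      exact hhiding ⟨team h, !team h, h, t, i₀, i₁, by simp, hlt, hteam h, hi₀ ▸ hteam i₀,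
        hi₁ ▸ hteam i₁, by rw [hrun _ hn, ← hu, Function.update_eq_self]⟩
    obtain ⟨j, hj⟩ := hne (!team h)
    refine ⟨j, hj, fun j' hj' => ?_⟩
    rcases lt_trichotomy j' j with hlt | rfl | hlt
    exacts [absurd hj (hunique j' j hlt hj'), rfl, absurd hj' (hunique j j' hlt hj)]

end CriticalConfigurations

/-! ### Removing the obstructions -/

section Obstructions

variable {n : ℕ} {A : Algorithm n} {input : Fin n → Bool}

/-- The pair `s` (configuration, budget) is bivalent, although the processes `p_k, …, p_{n-1}` by
themselves decide only `x`; it is reached from `C` by events of `p_k, …, p_{n-1}` and has no budget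
for the other processes. -/
structure IsTailBivalent (input : Fin n → Bool) (C : Config A) (k : Fin n) (x : Bool)
    (s : Config A × (Fin n → ℕ)) : Prop where
  exists_run : ∃ ρ, (∀ e ∈ ρ, eventBy (Ici k) e) ∧ s.1 = run A input C ρ
  budget_eq_zero : ∀ j < k, s.2 j = 0
  onlyDecides : OnlyDecides input (Ici k) x s.1
  bivalent : Bivalent input s.1 s.2

lemma IsTailBivalent.reachable {C : Config A} (hC : Reachable input C) {k : Fin n} {x : Bool}
    {s : Config A × (Fin n → ℕ)} (hs : IsTailBivalent input C k x s) : Reachable input s.1 := by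
  obtain ⟨ρ, -, hρ⟩ := hs.exists_run
  exact hρ ▸ hC.run ρ

lemma IsTailBivalent.trans {C : Config A} {k j : Fin n} {x y : Bool}
    {s s' : Config A × (Fin n → ℕ)} (hs : IsTailBivalent input C k x s) (hjk : j ≤ k)
    (hs' : IsTailBivalent input s.1 j y s') : IsTailBivalent input C j y s' where
  exists_run := by
    obtain ⟨ρ, hρ, hs⟩ := hs.exists_run
    obtain ⟨ρ', hρ', hs'⟩ := hs'.exists_run
    have hρ : ∀ e ∈ ρ, eventBy (Ici j) e :=
      fun e he => eventBy_mono (Ici_subset_Ici.mpr hjk) (hρ e he)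
    exact ⟨ρ ++ ρ', List.forall_mem_append.mpr ⟨hρ, hρ'⟩, by rw [run_append, ← hs, hs']⟩
  __ := hs'

lemma IsTailBivalent.applyEvent {C D : Config A} {k : Fin n} {x : Bool} {c c' : Fin n → ℕ}
    {e : Event n} (hD : IsTailBivalent input C k x (D, c)) (he : eventBy (Ici k) e)
    (hl : Legal e c c') (hbiv : Bivalent input (applyEvent A input D e) c') :
    IsTailBivalent input C k x (RecoverableConsensus.applyEvent A input D e, c') :=
  hD.trans le_rfl
    { exists_run := ⟨[e], by simpa using he, rfl⟩
      budget_eq_zero := fun j hj => Nat.eq_zero_of_le_zero <|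
        (hl.apply_le (eventBy_mono (Ici_subset_Ici.mpr hj.le) he)).trans_eq
          (hD.budget_eq_zero j hj)
      onlyDecides := hD.onlyDecides.run (σ := [e]) (by simpa using he)
      bivalent := hbiv }

-- The step by `p_i` pays for everything that happened since `C`.
lemma IsTailBivalent.move {C D : Config A} {b c c' : Fin n → ℕ} {k i : Fin n} {x : Bool}
    (hD : IsTailBivalent input C k x (D, c)) (hik : i < k) (hl : Legal (.step i) c c') :
    Move input (C, b) (RecoverableConsensus.applyEvent A input D (.step i), c') := by
  obtain ⟨ρ, hρ, rfl⟩ := hD.exists_run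
  refine ⟨ρ ++ [.step i], by rw [run_append]; rfl, .inl ⟨i, by simp, fun j hj => ?_, ?_⟩⟩
  · have hj : Event.crash j ∈ ρ := by simpa using hj
    exact hik.trans_le (hρ _ hj)
  · intro j hj
    exact ((hl j hj).trans_eq (hD.budget_eq_zero j (hj.trans_lt hik))).trans (Nat.zero_le _)

lemma IsTailBivalent.exists_isCritical (hA : Agreement A) (hW : RecWaitFree A) {C : Config A}
    (hC : Reachable input C) {b : Fin n → ℕ} {z k : Fin n} (hz : IsBot z) (hzk : z < k)
    (hmin : ∀ s', Bivalent input s'.1 s'.2 → s'.2 z = 0 → ¬ Move input (C, b) s') {x : Bool}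
    {s : Config A × (Fin n → ℕ)} (hs : IsTailBivalent input C k x s) :
    ∃ D c, IsTailBivalent input C k x (D, c) ∧ IsCritical input D c := by
  obtain ⟨⟨D, c⟩, hD, hleast⟩ := (wellFounded_move (input := input) hA hW).has_min
    {s | IsTailBivalent input C k x s} ⟨s, hs⟩
  refine ⟨D, c, hD, hD.bivalent, fun e c' hl hbiv => ?_⟩
  by_cases he : eventBy (Ici k) e
  · exact hleast _ (hD.applyEvent he hl hbiv) ⟨hD.reachable hC, hD.bivalent, move_of_legal hl⟩
  cases e with
  | crash i =>
    have hci : c i = 0 := hD.budget_eq_zero i (not_le.mp he)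
    exact absurd hl.1 (by simp [hci])
  | step i =>
    exact hmin _ hbiv
      (Nat.eq_zero_of_le_zero ((hl z (hz i)).trans_eq (hD.budget_eq_zero z hzk)))
      (hD.move (not_le.mp he) hl)

lemma OnlyDecides.not_merging (hW : RecWaitFree A) {D : Config A} (hD : Reachable input D)
    {c : Fin n → ℕ} {z k l : Fin n} {v : Bool} (h : OnlyDecides input (Ici k) v D) (hkl : k ≤ l)
    (hzl : z < l) : ¬ Merging input z l D c := by
  rintro ⟨x, y, h', t, hxy, hx, hy, hz, heq⟩
  obtain rfl : y = v := h.eq_of_soloDecides hkl (hy.soloDecides hW hD)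
  have hstep : OnlyDecides input (Ici l) y (applyEvent A input D (.step l)) :=
    (h.run (σ := [.step l]) (List.forall_mem_singleton.mpr hkl)).mono (Ici_subset_Ici.mpr hkl)
  exact hxy ((hx.onlyDecides hz fun _ hj => hzl.trans_le hj).eq_of_oval_eq hW
    (hD.run [.step l]) hstep heq)

-- `p_l` crashes right after its step.
lemma Merging.exists_isTailBivalent (hW : RecWaitFree A) {C : Config A} (hC : Reachable input C)
    {b : Fin n → ℕ} {z l : Fin n} (hzl : z < l) (h : Merging input z l C b) :
    ∃ x s, IsTailBivalent input C l x s := by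
  obtain ⟨x, y, h, t, hxy, hx, hy, hz, heq⟩ := h
  let D := run A input (run A input C [.step l]) (lambdaSched n l)
  have honly : OnlyDecides input (Ici l) x D :=
    (hx.onlyDecides hz fun _ hj => hzl.trans_le hj).run_lambdaSched heq
  have hsolo : SoloDecides input D z y := by
    obtain ⟨w, hw⟩ := (hC.run [.step l]).exists_soloDecides hW z
    obtain rfl : w = y := hy.eq_of_soloDecides (t := []) hw
    exact hw.congr ((indist_Iio_run_lambdaSched _ l).symm.mono (singleton_subset_iff.mpr hzl))
  have hD : Reachable input D := (hC.run _).run _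
  refine ⟨x, (D, 0), ⟨.step l :: lambdaSched n l, ?_, rfl⟩, fun _ _ => rfl, honly, ?_⟩
  · exact List.forall_mem_cons.mpr ⟨self_mem_Ici, eventBy_of_mem_lambdaSched⟩
  · exact bivalent_of_ne hxy ((honly.soloDecides hW hD self_mem_Ici).canDecide 0)
      (hsolo.canDecide 0)

-- After a crash of `p_{i₁}, …, p_{n-1}`, these processes cannot tell `C` from the outcome of the
-- hidden schedule, which contains some earlier process since otherwise it would also be hidden
-- from `p_{i₀}`.
lemma InTeam.isTailBivalent_of_run_oval_eq (hW : RecWaitFree A) {C : Config A}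
    (hC : Reachable input C) {b : Fin n → ℕ} {x y : Bool} {h i₀ i₁ : Fin n} {t : List (Fin n)}
    (hxy : x ≠ y) (hlt : i₀ < i₁) (hx : InTeam input C b x h) (hy : InTeam input C b y i₀)
    (heq : (run A input C ((h :: t).map .step)).oval = C.oval) :
    IsTailBivalent input C i₁ x (run A input C (lambdaSched n i₁), 0) := by
  have hsolo : SoloDecides input C i₀ y := hy.soloDecides hW hC
  obtain ⟨m, hm, hmi₁⟩ : ∃ m ∈ h :: t, m < i₁ := by
    by_contra! hge
    have hi₀ : i₀ ∉ h :: t := fun hmem => (hge i₀ hmem).not_gt hlt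
    exact hxy (hx.eq_of_soloDecides
      (hsolo.congr_steps (s := []) List.not_mem_nil hi₀ heq.symm)).symm
  have honly : OnlyDecides input (Ici i₁) x (run A input C (lambdaSched n i₁)) :=
    (hx.onlyDecides hm fun _ hj => hmi₁.trans_le hj).run_lambdaSched heq
  have hsolo' : SoloDecides input (run A input C (lambdaSched n i₁)) i₀ y :=
    hsolo.congr ((indist_Iio_run_lambdaSched C i₁).symm.mono (singleton_subset_iff.mpr hlt))
  exact ⟨⟨_, eventBy_of_mem_lambdaSched, rfl⟩, fun _ _ => rfl, honly, bivalent_of_ne hxy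
    ((honly.soloDecides hW (hC.run _) self_mem_Ici).canDecide 0) (hsolo'.canDecide 0)⟩

lemma Hiding.exists_isTailBivalent (hW : RecWaitFree A) {C : Config A} (hC : Reachable input C)
    {b : Fin n → ℕ} {z : Fin n} (hz : IsBot z) (h : Hiding input C b) :
    ∃ k, z < k ∧ ∃ x s, IsTailBivalent input C k x s := by
  obtain ⟨x, y, h, t, i₀, i₁, hxy, hlt, hx, hy₀, -, heq⟩ := h
  exact ⟨i₁, (hz i₀).trans_lt hlt, x, _,
    hx.isTailBivalent_of_run_oval_eq hW hC hxy hlt hy₀ heq⟩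

-- The hidden schedule starts on team `v`, so the two members of the other team are below `k`.
lemma OnlyDecides.exists_lt_isTailBivalent (hW : RecWaitFree A) {D : Config A}
    (hD : Reachable input D) {c : Fin n → ℕ} {z k : Fin n} (hz : IsBot z) {v : Bool}
    (h : OnlyDecides input (Ici k) v D) (hhiding : Hiding input D c) :
    ∃ j < k, z < j ∧ ∃ x s, IsTailBivalent input D j x s := by
  obtain ⟨x, y, h', t, i₀, i₁, hxy, hlt, hx, hy₀, hy₁, heq⟩ := hhiding
  have hxv : x = v := by
    rcases le_or_gt k h' with hk | hk
    · exact h.eq_of_soloDecides hk (hx.soloDecides hW hD)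
    · exact (hx.onlyDecides List.mem_cons_self fun _ hj => hk.trans_le hj).eq_of_oval_eq hW hD
        h heq
  have hi₁ : i₁ < k := by
    by_contra! hk
    exact hxy (hxv.trans (h.eq_of_soloDecides hk (hy₁.soloDecides hW hD)).symm)
  exact ⟨i₁, hi₁, (hz i₀).trans_lt hlt, x, _,
    hx.isTailBivalent_of_run_oval_eq hW hD hxy hlt hy₀ heq⟩

lemma IsTailBivalent.exists_nRecording (hA : Agreement A) (hW : RecWaitFree A) {C : Config A}
    (hC : Reachable input C) {b : Fin n → ℕ} {z l k : Fin n} (hz : IsBot z) (hl : IsTop l)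
    (hmin : ∀ s', Bivalent input s'.1 s'.2 → s'.2 z = 0 → ¬ Move input (C, b) s') (hzk : z < k)
    {x : Bool} {s : Config A × (Fin n → ℕ)} (hs : IsTailBivalent input C k x s) :
    ∃ O, NRecording n (A.objType O) := by
  induction k using WellFoundedLT.induction generalizing x s with
  | ind k ih =>
    obtain ⟨D, c, hD, hcrit⟩ := hs.exists_isCritical hA hW hC hz hzk hmin
    have hreach : Reachable input D := hD.reachable hC
    by_cases hhiding : Hiding input D c
    · obtain ⟨j, hjk, hzj, y, s', hs'⟩ :=
        hD.onlyDecides.exists_lt_isTailBivalent hW hreach hz hhiding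
      exact ih j hjk hzj (hD.trans hjk.le hs')
    · have hzl : z < l := hzk.trans_le (hl k)
      exact hcrit.exists_nRecording hA hW hreach hl hzl (hD.budget_eq_zero z hzk)
        (hD.onlyDecides.not_merging hW hreach (hl k) hzl) hhiding

end Obstructions

end RecoverableConsensus

open RecoverableConsensus in
theorem nRecording_of_recoverable_consensus_general {n : ℕ} (hn : 1 < n) (A : Algorithm n)
    (hA : SolvesRecConsensus A) : ∃ o, NRecording n (A.objType o) := by
  obtain ⟨hA, hV, hW⟩ := hA
  let z : Fin n := ⟨0, by omega⟩
  let l : Fin n := ⟨n - 1, by omega⟩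
  have hz : IsBot z := fun i => Nat.zero_le i
  have hl : IsTop l := fun i => Nat.le_sub_one_of_lt i.isLt
  have hzl : z < l := Nat.sub_pos_of_lt hn
  obtain ⟨input, C, b, hC, hbz, hcrit, hmin⟩ := exists_isCritical_of_validity hA hV hW hz hzl.ne
  by_cases hmerging : Merging input z l C b
  · obtain ⟨x, s, hs⟩ := hmerging.exists_isTailBivalent hW hC hzl
    exact hs.exists_nRecording hA hW hC hz hl hmin hzl
  by_cases hhiding : Hiding input C b
  · obtain ⟨k, hzk, x, s, hs⟩ := hhiding.exists_isTailBivalent hW hC hz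
    exact hs.exists_nRecording hA hW hC hz hl hmin hzk
  exact hcrit.exists_nRecording hA hW hC hl hzl hbz hmerging hhiding

open RecoverableConsensus in
/-- If there exists a recoverable wait-free binary consensus algorithm for
`n > 1` processes using objects of deterministic types `𝒯_0, 𝒯_1, 𝒯_2, …`, then at least one
of the types `𝒯_k` is `n`-recording. -/
theorem nRecording_of_recoverable_consensus
    (n : ℕ) (hn : 1 < n) (T : ℕ → DetType) (A : Algorithm n)
    (hT : ∀ o : A.ObjIdx, ∃ k : ℕ, A.objType o = T k)
    (hA : SolvesRecConsensus A) :
    ∃ k : ℕ, NRecording n (T k) := by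
  obtain ⟨o, ho⟩ := nRecording_of_recoverable_consensus_general hn A hA
  obtain ⟨k, hk⟩ := hT o
  exact ⟨k, hk ▸ ho⟩
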